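/- arXiv:1204.6692 — 3 statements merged into one kernel-verified Lean document; each statement's English description precedes it below -/
import Mathlib

section
/- Let n' = 2m' with m' > 1, and write n' = 2^{l'} · (odd). Suppose p_0 = g^Q for some monic irreducible polynomial g ∈ F_2[x] of type (B,m'), so p_0 is monic irreducible of type (D,n'), and suppose p_0 has a root α ∈ F_{2^{n'}} which is not θ-periodic. Then there exist an integer s' with 1 ≤ s' ≤ l' and monic irreducible polynomials p_0, p_1, …, p_{s'} of degree n' over F_2 such that p_{i+1} divides p_i^Q for every 0 ≤ i < s', each p_i with i < s' is of type (D,n'), and p_{s'} is of type (A,n'). -/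
open Polynomial

noncomputable def Qtrans (f : Polynomial (ZMod 2)) : Polynomial (ZMod 2) :=
  ∑ i ∈ Finset.range (f.natDegree + 1),
    C (f.coeff i) * X ^ (f.natDegree - i) * (X ^ 2 + 1) ^ i

/-- The map `θ(x) = x + x⁻¹` (with the convention `0⁻¹ = 0`). -/
def theta {K : Type*} [Field K] (x : K) : K := x + x⁻¹

/-- An element is `θ`-periodic if some positive iterate of `θ` fixes it. -/
def ThetaPeriodic {K : Type*} [Field K] (α : K) : Prop :=
  ∃ k : ℕ, 1 ≤ k ∧ theta^[k] α = α

/-!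
`θ` is multiplication by a quadratic integer, seen on `x`-coordinates. Let `E` be the curve
`y² + xy = x³ + 1` over `F₂`, with Frobenius endomorphism `π`. Then `x(2P) = θ(x(P))²`, and since
`2 = π ∘ π̂`, the map `θ` is the action of the dual isogeny `π̂` on abscissas.

Put `n = 2m = 2 ^ l · odd` and `q = 2 ^ m`. Let `⋯ ↦ a₂ ↦ a₁ ↦ a₀` be any backward `θ`-orbit of a
root `a₀` of `g^Q`. Irreducibility of `g^Q` says `a₀ ^ q = a₀⁻¹`, that is, the points with abscissas
`a₀` and `a₀ ^ q` differ by the point of order two, whose abscissa is `0`. Lifting along `π̂`, the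
points with abscissas `aᵢ₊₁` and `aᵢ₊₁ ^ q` differ by a point killed by a power of `π̂`, whose
abscissa `t` generates the field with `2 ^ (2 ^ i)` elements. As long as the traces of the `aⱼ⁻¹`
vanish, `aᵢ₊₁` stays in the field with `2 ^ n` elements and `t` lies in the one with `2 ^ m`
elements, so that `2 ^ i ∣ m`. Hence a nonzero trace, which is what type A means, appears after at
most `l` steps.
-/

section TraceSum

variable {L : Type*} [Field L]

/-- The sum of the first `n` Frobenius iterates of `x`. It is the absolute trace when `x` lies in
the field with `2 ^ n` elements, but makes sense for every element of every extension. -/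
def traceSum (n : ℕ) (x : L) : L := ∑ i ∈ Finset.range n, x ^ 2 ^ i

lemma traceSum_zero_right (n : ℕ) : traceSum n (0 : L) = 0 := by
  simp [traceSum]

lemma traceSum_add_left (m n : ℕ) (x : L) :
    traceSum (m + n) x = traceSum m x + traceSum n (x ^ 2 ^ m) := by
  simp only [traceSum, Finset.sum_range_add, ← pow_mul, pow_add]

lemma pow_two_pow_two_mul_eq_self {m : ℕ} {x : L} (h : x ^ 2 ^ m = x⁻¹) :
    x ^ 2 ^ (2 * m) = x := by
  rw [two_mul, pow_add, pow_mul, h, inv_pow, h, inv_inv]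

lemma traceSum_two_mul_of_pow_eq_inv {m : ℕ} {x : L} (h : x ^ 2 ^ m = x⁻¹) :
    traceSum (2 * m) x = traceSum m x + traceSum m x⁻¹ := by
  rw [two_mul, traceSum_add_left, h]

lemma traceSum_two_mul_inv_of_pow_eq_inv {m : ℕ} {x : L} (h : x ^ 2 ^ m = x⁻¹) :
    traceSum (2 * m) x⁻¹ = traceSum (2 * m) x := by
  rw [traceSum_two_mul_of_pow_eq_inv h, traceSum_two_mul_of_pow_eq_inv (by rw [inv_pow, h]),
    inv_inv, add_comm]

variable [CharP L 2]

lemma traceSum_add_right (n : ℕ) (x y : L) :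
    traceSum n (x + y) = traceSum n x + traceSum n y := by
  simp only [traceSum, add_pow_char_pow, Finset.sum_add_distrib]

lemma traceSum_sq (n : ℕ) (x : L) : traceSum n (x ^ 2) = traceSum n x ^ 2 := by
  simp only [traceSum, sum_pow_char, pow_right_comm x 2]

lemma traceSum_sq_add_self (n : ℕ) (w : L) : traceSum n (w ^ 2 + w) = w ^ 2 ^ n + w := by
  have telescope : traceSum n (w ^ 2) + w = w ^ 2 ^ n + traceSum n w := by
    have first := traceSum_add_left 1 n w
    have last := traceSum_add_left n 1 w
    rw [add_comm n 1] at last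
    simp only [traceSum, Finset.sum_range_one, pow_one, pow_zero] at first last ⊢
    linear_combination last - first
  rw [traceSum_add_right]
  linear_combination telescope + (traceSum n w - w) * CharTwo.two_eq_zero (R := L)

end TraceSum

section Theta

variable {L : Type*} [Field L]

lemma theta_inv (x : L) : theta x⁻¹ = theta x := by
  rw [theta, theta, inv_inv, add_comm]

lemma mul_theta {x : L} (hx : x ≠ 0) : x * theta x = x ^ 2 + 1 := by
  rw [theta]
  field_simp

lemma theta_eq_theta_iff {x y : L} (hx : x ≠ 0) (hy : y ≠ 0) :
    theta x = theta y ↔ x = y ∨ x = y⁻¹ := by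
  refine ⟨fun h => ?_, ?_⟩
  · have factored : (x - y) * (x * y - 1) = 0 := by
      linear_combination x * mul_theta hy - y * mul_theta hx + x * y * h
    exact (mul_eq_zero.1 factored).imp sub_eq_zero.1
      fun hxy => eq_inv_of_mul_eq_one_left (sub_eq_zero.1 hxy)
  · rintro (rfl | rfl)
    exacts [rfl, theta_inv y]

lemma exists_ne_zero_theta_eq [IsAlgClosed L] (a : L) : ∃ x ≠ 0, theta x = a := by
  obtain ⟨x, hx⟩ := IsAlgClosed.exists_root (C 1 * X ^ 2 + C (-a) * X + C 1 : L[X])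
    (by rw [degree_quadratic one_ne_zero]; decide)
  replace hx : x ^ 2 - a * x + 1 = 0 := by simpa [sub_eq_add_neg] using hx
  have hx0 : x ≠ 0 := by
    rintro rfl
    simp at hx
  exact ⟨x, hx0, mul_left_cancel₀ hx0 (by linear_combination mul_theta hx0 + hx)⟩

variable [CharP L 2]

lemma theta_pow_two_pow (n : ℕ) (x : L) : theta (x ^ 2 ^ n) = theta x ^ 2 ^ n := by
  rw [theta, theta, add_pow_char_pow, inv_pow]

lemma traceSum_theta (n : ℕ) (x : L) : traceSum n (theta x) = traceSum n x + traceSum n x⁻¹ :=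
  traceSum_add_right n x x⁻¹

-- With `a = θ(x)`, the quotient `x / a` solves the Artin–Schreier equation `w² + w = a⁻²`.
lemma pow_two_pow_add_self {n : ℕ} {x : L} (ha : theta x ≠ 0)
    (hfix : theta x ^ 2 ^ n = theta x) :
    x ^ 2 ^ n + x = theta x * traceSum n (theta x)⁻¹ ^ 2 := by
  have hx : x ≠ 0 := by
    rintro rfl
    simp [theta] at ha
  have artinSchreier : (x / theta x) ^ 2 + x / theta x = (theta x)⁻¹ ^ 2 := by
    field_simp
    linear_combination mul_theta hx + x ^ 2 * CharTwo.two_eq_zero (R := L)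
  have h := traceSum_sq_add_self n (x / theta x)
  rw [artinSchreier, traceSum_sq, div_pow, hfix] at h
  rw [h]
  field_simp

end Theta

section SummationPolynomial

variable {L : Type*} [Field L]

/-- The third summation polynomial of the curve `y² + xy = x³ + 1` in characteristic two: it
vanishes when `x`, `y`, `z` are the abscissas of three points with sum zero. Since a point and its
opposite have the same abscissa, it is symmetric and does not see signs. -/
def summationPoly (x y z : L) : L :=
  x ^ 2 * y ^ 2 + x ^ 2 * z ^ 2 + y ^ 2 * z ^ 2 + x * y * z + 1

variable [CharP L 2]

lemma summationPoly_mul_summationPoly_inv {x y z : L} (hx : x ≠ 0) (hy : y ≠ 0) (hz : z ≠ 0) :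
    summationPoly x y z * summationPoly x y z⁻¹ =
      (x * y) ^ 2 * summationPoly (theta x) (theta y) (theta z) := by
  simp only [summationPoly, theta]
  field_simp
  grind

lemma summationPoly_eq_zero_or_of_theta {x y z : L} (hx : x ≠ 0) (hy : y ≠ 0) (hz : z ≠ 0)
    (h : summationPoly (theta x) (theta y) (theta z) = 0) :
    summationPoly x y z = 0 ∨ summationPoly x y z⁻¹ = 0 := by
  rw [← mul_eq_zero, summationPoly_mul_summationPoly_inv hx hy hz, h, mul_zero]

lemma artinSchreier_of_summationPoly_eq_zero {x y z : L} (hx : x ≠ 0) (hy : y ≠ 0)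
    (h : summationPoly x y z = 0) :
    (z * ((x + y) ^ 2 / (x * y))) ^ 2 + z * ((x + y) ^ 2 / (x * y)) =
      (theta x + theta y) ^ 2 := by
  simp only [summationPoly] at h
  simp only [theta]
  field_simp
  grind

lemma pow_two_pow_eq_self_of_summationPoly_eq_zero {m : ℕ} {x z : L} (hx : x ^ 2 ^ m ≠ x)
    (hfix : x ^ 2 ^ (2 * m) = x) (htrace : traceSum (2 * m) (theta x) = 0)
    (h : summationPoly x (x ^ 2 ^ m) z = 0) : z ^ 2 ^ m = z := by
  have hx0 : x ≠ 0 := by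
    rintro rfl
    exact hx (zero_pow (by positivity))
  rw [two_mul, traceSum_add_left, ← theta_pow_two_pow, ← traceSum_add_right] at htrace
  rw [two_mul, pow_add, pow_mul] at hfix
  set y := x ^ 2 ^ m with hy
  have hy0 : y ≠ 0 := pow_ne_zero _ hx0
  have hc0 : (x + y) ^ 2 / (x * y) ≠ 0 :=
    div_ne_zero (pow_ne_zero _ fun hxy => hx (CharTwo.add_eq_zero.1 hxy).symm) (mul_ne_zero hx0 hy0)
  have hc : ((x + y) ^ 2 / (x * y)) ^ 2 ^ m = (x + y) ^ 2 / (x * y) := by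
    rw [div_pow, pow_right_comm, add_pow_char_pow, mul_pow, hfix, ← hy, add_comm, mul_comm]
  have hw := traceSum_sq_add_self m (z * ((x + y) ^ 2 / (x * y)))
  rw [artinSchreier_of_summationPoly_eq_zero hx0 hy0 h, traceSum_sq, htrace, zero_pow two_ne_zero,
    eq_comm, CharTwo.add_eq_zero, mul_pow, hc] at hw
  exact mul_right_cancel₀ hc0 hw

end SummationPolynomial

section TorsionAbscissa

variable {L : Type*} [Field L]

/-- The properties of the abscissas of points killed by a power of `π̂` which determine their
degree over the prime field: `t` lies in the field with `2 ^ N` elements, where both `t` and `t⁻¹`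
have trace one. -/
structure IsTorsionAbscissa (N : ℕ) (t : L) : Prop where
  pow_eq_self : t ^ 2 ^ N = t
  traceSum_eq_one : traceSum N t = 1
  traceSum_inv_eq_one : traceSum N t⁻¹ = 1

lemma isTorsionAbscissa_one : IsTorsionAbscissa 1 (1 : L) := by
  constructor <;> simp [traceSum]

namespace IsTorsionAbscissa

variable [CharP L 2]

-- With `t = θ(x)`, the trace of `t⁻¹` makes `X² + tX + 1` irreducible over the field with `2 ^ N`
-- elements, so that the `2 ^ N`-power Frobenius exchanges its roots `x` and `x⁻¹`.
lemma of_theta {N : ℕ} {x : L} (h : IsTorsionAbscissa N (theta x)) :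
    IsTorsionAbscissa (2 * N) x := by
  have ht : theta x ≠ 0 := by
    intro ht
    simpa [ht, traceSum_zero_right] using h.traceSum_inv_eq_one
  have hx : x ^ 2 ^ N = x⁻¹ := by
    have hadd := pow_two_pow_add_self ht h.pow_eq_self
    rw [h.traceSum_inv_eq_one, one_pow, mul_one, theta, add_comm x] at hadd
    exact add_right_cancel hadd
  have htrace : traceSum (2 * N) x = 1 := by
    rw [traceSum_two_mul_of_pow_eq_inv hx, ← traceSum_theta, h.traceSum_eq_one]
  exact ⟨pow_two_pow_two_mul_eq_self hx, htrace,
    (traceSum_two_mul_inv_of_pow_eq_inv hx).trans htrace⟩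

lemma two_pow_dvd {j m : ℕ} {t : L} (h : IsTorsionAbscissa (2 ^ j) t) (hm : t ^ 2 ^ m = t) :
    2 ^ j ∣ m := by
  have isPeriodicPt_iff (d : ℕ) : Function.IsPeriodicPt (frobenius L 2) d t ↔ t ^ 2 ^ d = t := by
    rw [Function.IsPeriodicPt, Function.IsFixedPt, iterate_frobenius]
  cases j with
  | zero => exact one_dvd m
  | succ j =>
    have not_fixed : t ^ 2 ^ 2 ^ j ≠ t := by
      intro hfix
      have htrace := h.traceSum_eq_one
      rw [pow_succ, mul_two, traceSum_add_left, hfix, CharTwo.add_self_eq_zero] at htrace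
      exact zero_ne_one htrace
    rw [← Function.minimalPeriod_eq_prime_pow (mt (isPeriodicPt_iff _).1 not_fixed)
      ((isPeriodicPt_iff _).2 h.pow_eq_self)]
    exact ((isPeriodicPt_iff m).2 hm).minimalPeriod_dvd

end IsTorsionAbscissa

end TorsionAbscissa

section BackwardOrbit

variable {L : Type*} [Field L]

/-- A backward `θ`-orbit `⋯ ↦ a 2 ↦ a 1 ↦ a 0`. The entries are required to be nonzero since
`θ 0 = 0` only holds by the convention `0⁻¹ = 0`. -/
structure IsBackwardOrbit (a : ℕ → L) : Prop where
  ne_zero : ∀ i, a i ≠ 0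
  theta_succ : ∀ i, theta (a (i + 1)) = a i

lemma exists_isBackwardOrbit [IsAlgClosed L] {x : L} (hx : x ≠ 0) :
    ∃ a : ℕ → L, IsBackwardOrbit a ∧ a 0 = x := by
  choose preimage preimage_ne_zero theta_preimage using exists_ne_zero_theta_eq (L := L)
  refine ⟨fun i => preimage^[i] x, ⟨fun i => ?_, fun i => ?_⟩, rfl⟩
  · cases i with
    | zero => exact hx
    | succ i => simpa only [Function.iterate_succ_apply'] using preimage_ne_zero _
  · simp only [Function.iterate_succ_apply', theta_preimage]

namespace IsBackwardOrbit

variable [CharP L 2] {a : ℕ → L}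

lemma zero_pow_eq_self_of_pow_eq_self (h : IsBackwardOrbit a) {d i : ℕ} (hi : a i ^ 2 ^ d = a i) :
    a 0 ^ 2 ^ d = a 0 := by
  induction i with
  | zero => exact hi
  | succ i ih => exact ih (by rw [← h.theta_succ, ← theta_pow_two_pow, hi])

lemma pow_eq_self (h : IsBackwardOrbit a) {n i : ℕ} (h0 : a 0 ^ 2 ^ n = a 0)
    (htrace : ∀ j < i, traceSum n (a j)⁻¹ = 0) : a i ^ 2 ^ n = a i := by
  induction i with
  | zero => exact h0
  | succ i ih =>
    have hθ := h.theta_succ i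
    have hadd := pow_two_pow_add_self (n := n) (hθ ▸ h.ne_zero i)
      (by rw [hθ, ih fun j hj => htrace j (by lia)])
    rwa [hθ, htrace i i.lt_succ_self, zero_pow two_ne_zero, mul_zero, CharTwo.add_eq_zero] at hadd

lemma traceSum_eq_traceSum_inv (h : IsBackwardOrbit a) {n i : ℕ}
    (h0 : traceSum n (a 0) = traceSum n (a 0)⁻¹) (htrace : ∀ j < i, traceSum n (a j)⁻¹ = 0) :
    traceSum n (a i) = traceSum n (a i)⁻¹ := by
  induction i with
  | zero => exact h0
  | succ i ih =>
    rw [← CharTwo.add_eq_zero, ← traceSum_theta, h.theta_succ, ih fun j hj => htrace j (by lia),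
      htrace i i.lt_succ_self]

lemma exists_isTorsionAbscissa [IsAlgClosed L] (h : IsBackwardOrbit a) {m i : ℕ}
    (h0 : a 0 ^ 2 ^ m = (a 0)⁻¹) (hne : a 0 ^ 2 ^ m ≠ a 0)
    (htrace : ∀ j ≤ i, traceSum (2 * m) (a j)⁻¹ = 0) :
    ∃ t, IsTorsionAbscissa (2 ^ i) t ∧ t ^ 2 ^ m = t ∧
      summationPoly (a (i + 1)) (a (i + 1) ^ 2 ^ m) t = 0 := by
  have lift (j : ℕ) {t : L} (ht : t ≠ 0)
      (hsum : summationPoly (a j) (a j ^ 2 ^ m) (theta t) = 0) :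
      summationPoly (a (j + 1)) (a (j + 1) ^ 2 ^ m) t = 0 ∨
        summationPoly (a (j + 1)) (a (j + 1) ^ 2 ^ m) t⁻¹ = 0 :=
    summationPoly_eq_zero_or_of_theta (h.ne_zero _) (pow_ne_zero _ (h.ne_zero _)) ht
      (by rwa [theta_pow_two_pow, h.theta_succ])
  induction i with
  | zero =>
    refine ⟨1, isTorsionAbscissa_one, one_pow _, ?_⟩
    have differ_by_two_torsion : summationPoly (a 0) (a 0 ^ 2 ^ m) (theta 1) = 0 := by
      simp [h0, theta, summationPoly, h.ne_zero 0, CharTwo.add_self_eq_zero]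
    simpa using lift 0 one_ne_zero differ_by_two_torsion
  | succ i ih =>
    obtain ⟨t, ht, -, hsum⟩ := ih fun j hj => htrace j (by lia)
    obtain ⟨x, hx0, rfl⟩ := exists_ne_zero_theta_eq t
    obtain ⟨x', hx', hsum'⟩ : ∃ x', theta x' = theta x ∧
        summationPoly (a (i + 2)) (a (i + 2) ^ 2 ^ m) x' = 0 :=
      (lift (i + 1) hx0 hsum).elim (fun hs => ⟨x, rfl, hs⟩) fun hs => ⟨x⁻¹, theta_inv x, hs⟩
    have htrace_inv (j : ℕ) (hj : j < i + 2) : traceSum (2 * m) (a j)⁻¹ = 0 := htrace j (by lia)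
    refine ⟨x', pow_succ' 2 i ▸ (hx' ▸ ht).of_theta, ?_, hsum'⟩
    refine pow_two_pow_eq_self_of_summationPoly_eq_zero
      (mt h.zero_pow_eq_self_of_pow_eq_self hne)
      (h.pow_eq_self (pow_two_pow_two_mul_eq_self h0) htrace_inv) ?_ hsum'
    rw [h.theta_succ, h.traceSum_eq_traceSum_inv (traceSum_two_mul_inv_of_pow_eq_inv h0).symm
      fun j hj => htrace_inv j (by lia), htrace_inv (i + 1) (by lia)]

lemma exists_first_traceSum_inv_ne_zero [IsAlgClosed L] (h : IsBackwardOrbit a) {m l : ℕ}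
    (h0 : a 0 ^ 2 ^ m = (a 0)⁻¹) (hne : a 0 ^ 2 ^ m ≠ a 0) (hl : ¬ 2 ^ l ∣ m) :
    ∃ s ≤ l, traceSum (2 * m) (a s)⁻¹ ≠ 0 ∧ ∀ j < s, traceSum (2 * m) (a j)⁻¹ = 0 := by
  classical
  have hex : ∃ s ≤ l, traceSum (2 * m) (a s)⁻¹ ≠ 0 := by
    by_contra! hall
    obtain ⟨t, ht, htm, -⟩ := h.exists_isTorsionAbscissa h0 hne hall
    exact hl (ht.two_pow_dvd htm)
  obtain ⟨hsl, hs⟩ := Nat.find_spec hex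
  refine ⟨Nat.find hex, hsl, hs, fun j hj => ?_⟩
  by_contra hj0
  exact Nat.find_min hex hj ⟨by lia, hj0⟩

end IsBackwardOrbit

end BackwardOrbit

section Minpoly

lemma zmod_two_eq_one_of_ne_zero {c : ZMod 2} (hc : c ≠ 0) : c = 1 :=
  Fin.eq_one_of_ne_zero c hc

lemma natDegree_minpoly_inv {F L : Type*} [Field F] [Field L] [Algebra F L] {x : L}
    (hx : IsIntegral F x) : (minpoly F x⁻¹).natDegree = (minpoly F x).natDegree := by
  have adjoin_inv_le (y : L) :
      IntermediateField.adjoin F {y⁻¹} ≤ IntermediateField.adjoin F {y} :=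
    IntermediateField.adjoin_simple_le_iff.2
      (inv_mem (IntermediateField.mem_adjoin_simple_self F y))
  rw [← IntermediateField.adjoin.finrank hx, ← IntermediateField.adjoin.finrank hx.inv,
    (adjoin_inv_le x).antisymm (by simpa using adjoin_inv_le x⁻¹)]

lemma reverse_minpoly_inv {F L : Type*} [Field F] [Field L] [Algebra F L] {x : L}
    (hx : IsIntegral F x) (hx0 : x ≠ 0) :
    (minpoly F x⁻¹).reverse = C ((minpoly F x⁻¹).coeff 0) * minpoly F x := by
  have htrailing : (minpoly F x⁻¹).natTrailingDegree = 0 :=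
    natTrailingDegree_eq_zero.2 <| Or.inr <| minpoly.coeff_zero_ne_zero hx.inv (inv_ne_zero hx0)
  have hdvd : minpoly F x ∣ (minpoly F x⁻¹).reverse := by
    let := invertibleOfNonzero (inv_ne_zero hx0)
    refine minpoly.dvd F x ?_
    simpa [aeval_def] using
      (eval₂_reverse_eq_zero_iff (algebraMap F L) x⁻¹ (minpoly F x⁻¹)).2 (minpoly.aeval F x⁻¹)
  rw [eq_leadingCoeff_mul_of_monic_of_dvd_of_natDegree_le (minpoly.monic hx) hdvd
    ((reverse_natDegree_le _).trans (natDegree_minpoly_inv hx).le), reverse_leadingCoeff,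
    trailingCoeff, htrailing]

variable {L : Type*} [Field L] [Algebra (ZMod 2) L]

lemma algebraMap_nextCoeff_minpoly {x : L} (hx : IsIntegral (ZMod 2) x) :
    algebraMap (ZMod 2) L (minpoly (ZMod 2) x).nextCoeff =
      traceSum (minpoly (ZMod 2) x).natDegree x := by
  have := IntermediateField.adjoin.finiteDimensional hx
  have := Module.finite_of_finite (ZMod 2) (M := IntermediateField.adjoin (ZMod 2) {x})
  have h := FiniteField.algebraMap_trace_eq_sum_pow (ZMod 2)
    (IntermediateField.adjoin (ZMod 2) {x}) (IntermediateField.AdjoinSimple.gen (ZMod 2) x)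
  rw [trace_adjoinSimpleGen hx, CharTwo.neg_eq, IntermediateField.adjoin.finrank hx,
    Nat.card_zmod] at h
  simpa [traceSum] using congrArg (algebraMap (IntermediateField.adjoin (ZMod 2) {x}) L) h

lemma algebraMap_coeff_one_minpoly {x : L} (hx : IsIntegral (ZMod 2) x) (hx0 : x ≠ 0) :
    algebraMap (ZMod 2) L ((minpoly (ZMod 2) x).coeff 1) =
      traceSum (minpoly (ZMod 2) x).natDegree x⁻¹ := by
  have hcoeff := minpoly.coeff_zero_ne_zero hx.inv (inv_ne_zero hx0)
  have hreverse := reverse_minpoly_inv hx hx0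
  rw [zmod_two_eq_one_of_ne_zero hcoeff, C_1, one_mul] at hreverse
  rw [← hreverse, coeff_one_reverse, algebraMap_nextCoeff_minpoly hx.inv, hreverse,
    natDegree_minpoly_inv hx]

lemma pow_two_pow_eq_self_iff_natDegree_dvd {p : (ZMod 2)[X]} (hp : Irreducible p) {x : L}
    (hx : aeval x p = 0) (d : ℕ) : x ^ 2 ^ d = x ↔ p.natDegree ∣ d := by
  have hassoc : Associated (minpoly (ZMod 2) x) p :=
    (minpoly.irreducible (IsAlgebraic.isIntegral ⟨p, hp.ne_zero, hx⟩)).associated_of_dvd hp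
      (minpoly.dvd _ _ hx)
  rw [hp.natDegree_dvd_iff_dvd_X_pow_card_pow_sub_X, Nat.card_zmod, ← hassoc.dvd_iff_dvd_left,
    minpoly.dvd_iff]
  simp [sub_eq_zero]

end Minpoly

section Qtrans

lemma natDegree_Qtrans (f : (ZMod 2)[X]) : (Qtrans f).natDegree = 2 * f.natDegree := by
  rcases eq_or_ne f 0 with rfl | hf
  · simp [Qtrans]
  have natDegree_term_le (i : ℕ) (hi : i ≤ f.natDegree) :
      (C (f.coeff i) * X ^ (f.natDegree - i) * (X ^ 2 + 1) ^ i).natDegree ≤ f.natDegree + i := by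
    compute_degree
    lia
  refine natDegree_eq_of_le_of_coeff_ne_zero
    (natDegree_sum_le_of_forall_le _ _ fun i hi => ?_) ?_
  · have := Finset.mem_range_succ_iff.1 hi
    exact (natDegree_term_le i this).trans (by lia)
  · have coeff_lower_term (i : ℕ) (hi : i ∈ Finset.range f.natDegree) :
        (C (f.coeff i) * X ^ (f.natDegree - i) * (X ^ 2 + 1) ^ i).coeff (2 * f.natDegree) = 0 := by
      have := Finset.mem_range.1 hi
      exact coeff_eq_zero_of_natDegree_lt ((natDegree_term_le i this.le).trans_lt (by lia))
    have top : ((X ^ 2 + 1 : (ZMod 2)[X]) ^ f.natDegree).coeff (2 * f.natDegree) = 1 := by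
      have hmonic : (X ^ 2 + 1 : (ZMod 2)[X]).Monic := by monicity!
      have hdeg : (X ^ 2 + 1 : (ZMod 2)[X]).natDegree = 2 := by compute_degree!
      have h := coeff_pow_mul_natDegree (X ^ 2 + 1 : (ZMod 2)[X]) f.natDegree
      rwa [hdeg, hmonic.leadingCoeff, one_pow, mul_comm] at h
    rw [Qtrans, Finset.sum_range_succ, coeff_add, finsetSum_coeff,
      Finset.sum_eq_zero coeff_lower_term, Nat.sub_self, pow_zero, mul_one, coeff_C_mul, top]
    simpa using hf

variable {L : Type*} [Field L] [Algebra (ZMod 2) L]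

lemma aeval_Qtrans (f : (ZMod 2)[X]) {x : L} (hx : x ≠ 0) :
    aeval x (Qtrans f) = x ^ f.natDegree * aeval (theta x) f := by
  rw [Qtrans, map_sum, aeval_eq_sum_range, Finset.mul_sum]
  refine Finset.sum_congr rfl fun i hi => ?_
  rw [← Nat.sub_add_cancel (Finset.mem_range_succ_iff.1 hi), pow_add]
  simp only [map_mul, map_pow, map_add, map_one, aeval_C, aeval_X, Nat.add_sub_cancel,
    ← mul_theta hx, Algebra.smul_def, mul_pow]
  ring

lemma pow_two_pow_eq_inv_of_aeval_Qtrans_eq_zero {g : (ZMod 2)[X]} (hg : Irreducible g)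
    (hgQ : Irreducible (Qtrans g)) {x : L} (hx : aeval x (Qtrans g) = 0) :
    x ^ 2 ^ g.natDegree = x⁻¹ ∧ x ^ 2 ^ g.natDegree ≠ x := by
  have : CharP L 2 := charP_of_injective_algebraMap (algebraMap (ZMod 2) L).injective 2
  have hne : x ^ 2 ^ g.natDegree ≠ x := by
    rw [Ne, pow_two_pow_eq_self_iff_natDegree_dvd hgQ hx, natDegree_Qtrans]
    exact Nat.not_dvd_of_pos_of_lt hg.natDegree_pos (by have := hg.natDegree_pos; lia)
  have hx0 : x ≠ 0 := by
    rintro rfl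
    exact hne (zero_pow (by positivity))
  have htheta : theta (x ^ 2 ^ g.natDegree) = theta x := by
    rw [aeval_Qtrans g hx0] at hx
    rw [theta_pow_two_pow, pow_two_pow_eq_self_iff_natDegree_dvd hg
      ((mul_eq_zero.1 hx).resolve_left (pow_ne_zero _ hx0))]
  exact ⟨((theta_eq_theta_iff (pow_ne_zero _ hx0) hx0).1 htheta).resolve_left hne, hne⟩

lemma exists_isBackwardOrbit_of_irreducible_Qtrans [IsAlgClosed L] {g : (ZMod 2)[X]}
    (hg : Irreducible g) (hgQ : Irreducible (Qtrans g)) :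
    ∃ a : ℕ → L, IsBackwardOrbit a ∧ minpoly (ZMod 2) (a 0) = Qtrans g ∧
      a 0 ^ 2 ^ g.natDegree = (a 0)⁻¹ ∧ a 0 ^ 2 ^ g.natDegree ≠ a 0 := by
  obtain ⟨α, hα⟩ := IsAlgClosed.exists_aeval_eq_zero L (Qtrans g) hgQ.degree_pos.ne'
  have hmonic : (Qtrans g).Monic :=
    zmod_two_eq_one_of_ne_zero (leadingCoeff_ne_zero.2 hgQ.ne_zero)
  obtain ⟨hinv, hne⟩ := pow_two_pow_eq_inv_of_aeval_Qtrans_eq_zero hg hgQ hα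
  have hα0 : α ≠ 0 := by
    rintro rfl
    simp at hne
  obtain ⟨a, ha, rfl⟩ := exists_isBackwardOrbit hα0
  exact ⟨a, ha, (minpoly.eq_of_irreducible_of_monic hgQ hα hmonic).symm, hinv, hne⟩

namespace IsBackwardOrbit

variable {a : ℕ → L}

lemma minpoly_succ_dvd_Qtrans_minpoly (h : IsBackwardOrbit a) (i : ℕ) :
    minpoly (ZMod 2) (a (i + 1)) ∣ Qtrans (minpoly (ZMod 2) (a i)) := by
  refine minpoly.dvd _ _ ?_
  rw [aeval_Qtrans _ (h.ne_zero _), h.theta_succ, minpoly.aeval, mul_zero]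

lemma natDegree_minpoly_eq [Algebra.IsIntegral (ZMod 2) L] (h : IsBackwardOrbit a) {i : ℕ}
    (htrace : ∀ j < i, traceSum (minpoly (ZMod 2) (a 0)).natDegree (a j)⁻¹ = 0) :
    (minpoly (ZMod 2) (a i)).natDegree = (minpoly (ZMod 2) (a 0)).natDegree := by
  have : CharP L 2 := charP_of_injective_algebraMap (algebraMap (ZMod 2) L).injective 2
  have pow_eq_self_iff (j d : ℕ) :
      a j ^ 2 ^ d = a j ↔ (minpoly (ZMod 2) (a j)).natDegree ∣ d :=
    pow_two_pow_eq_self_iff_natDegree_dvd (minpoly.irreducible (Algebra.IsIntegral.isIntegral _))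
      (minpoly.aeval _ _) d
  refine Nat.dvd_antisymm ?_ ?_
  · exact (pow_eq_self_iff i _).1 (h.pow_eq_self ((pow_eq_self_iff 0 _).2 dvd_rfl) htrace)
  · exact (pow_eq_self_iff 0 _).1
      (h.zero_pow_eq_self_of_pow_eq_self ((pow_eq_self_iff i _).2 dvd_rfl))

lemma algebraMap_coeff_minpoly [Algebra.IsIntegral (ZMod 2) L] (h : IsBackwardOrbit a) {m i : ℕ}
    (hdeg : (minpoly (ZMod 2) (a 0)).natDegree = 2 * m) (h0 : a 0 ^ 2 ^ m = (a 0)⁻¹)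
    (htrace : ∀ j < i, traceSum (2 * m) (a j)⁻¹ = 0) :
    algebraMap (ZMod 2) L ((minpoly (ZMod 2) (a i)).coeff (2 * m - 1)) =
        traceSum (2 * m) (a i)⁻¹ ∧
      algebraMap (ZMod 2) L ((minpoly (ZMod 2) (a i)).coeff 1) = traceSum (2 * m) (a i)⁻¹ := by
  have : CharP L 2 := charP_of_injective_algebraMap (algebraMap (ZMod 2) L).injective 2
  have hint : IsIntegral (ZMod 2) (a i) := Algebra.IsIntegral.isIntegral _
  have hdegi : (minpoly (ZMod 2) (a i)).natDegree = 2 * m := by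
    rw [h.natDegree_minpoly_eq (hdeg ▸ htrace), hdeg]
  have hnext := algebraMap_nextCoeff_minpoly hint
  rw [nextCoeff_of_natDegree_pos (minpoly.natDegree_pos hint), hdegi,
    h.traceSum_eq_traceSum_inv (traceSum_two_mul_inv_of_pow_eq_inv h0).symm htrace] at hnext
  exact ⟨hnext, hdegi ▸ algebraMap_coeff_one_minpoly hint (h.ne_zero i)⟩

end IsBackwardOrbit

end Qtrans

theorem stmt_8_general (n l k : ℕ) (hodd : Odd k) (hfact : n = 2 ^ l * k)
    (g : (ZMod 2)[X]) (hgirr : Irreducible g) (hgdeg : n = 2 * g.natDegree)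
    (hirr : Irreducible (Qtrans g)) :
    ∃ (s : ℕ) (P : ℕ → (ZMod 2)[X]),
      s ≤ l ∧ P 0 = Qtrans g ∧
      (∀ i ≤ s, (P i).Monic ∧ Irreducible (P i) ∧ (P i).natDegree = n) ∧
      (∀ i < s, P (i + 1) ∣ Qtrans (P i)) ∧
      (∀ i < s, (P i).coeff (n - 1) = 0 ∧ (P i).coeff 1 = 0) ∧
      ((P s).coeff (n - 1) = 1 ∧ (P s).coeff 1 = 1) := by
  have hint (x : AlgebraicClosure (ZMod 2)) : IsIntegral (ZMod 2) x :=
    Algebra.IsIntegral.isIntegral x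
  obtain ⟨a, ha, hmin, hinv, hne⟩ :=
    exists_isBackwardOrbit_of_irreducible_Qtrans (L := AlgebraicClosure (ZMod 2)) hgirr hirr
  have hl : ¬ 2 ^ l ∣ g.natDegree := by
    rintro ⟨c, hc⟩
    have hk : 2 ^ l * k = 2 ^ l * (2 * c) := by rw [← hfact, hgdeg, hc, mul_left_comm]
    exact Nat.not_even_iff_odd.2 hodd
      (Nat.eq_of_mul_eq_mul_left (by positivity) hk ▸ even_two_mul c)
  obtain ⟨s, hsl, hs, htrace⟩ := ha.exists_first_traceSum_inv_ne_zero hinv hne hl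
  have hdeg0 : (minpoly (ZMod 2) (a 0)).natDegree = 2 * g.natDegree := by
    rw [hmin, natDegree_Qtrans]
  subst hgdeg
  refine ⟨s, fun i => minpoly (ZMod 2) (a i), hsl, hmin, fun i hi => ?_,
    fun i _ => ha.minpoly_succ_dvd_Qtrans_minpoly i, fun i hi => ?_, ?_⟩
  · refine ⟨minpoly.monic (hint _), minpoly.irreducible (hint _), ?_⟩
    rw [ha.natDegree_minpoly_eq (hdeg0 ▸ fun j hj => htrace j (by lia)), hdeg0]
  · obtain ⟨h1, h2⟩ := ha.algebraMap_coeff_minpoly hdeg0 hinv fun j hj => htrace j (hj.trans hi)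
    rw [htrace i hi] at h1 h2
    exact ⟨(map_eq_zero _).1 h1, (map_eq_zero _).1 h2⟩
  · obtain ⟨h1, h2⟩ := ha.algebraMap_coeff_minpoly hdeg0 hinv htrace
    exact ⟨zmod_two_eq_one_of_ne_zero ((_root_.map_ne_zero _).1 (h1 ▸ hs)),
      zmod_two_eq_one_of_ne_zero ((_root_.map_ne_zero _).1 (h2 ▸ hs))⟩

theorem stmt_8 (n' m' l' k : ℕ) (hm : 1 < m') (hn : n' = 2 * m')
    (hodd : Odd k) (hfact : n' = 2 ^ l' * k)
    (g : Polynomial (ZMod 2)) (hgmon : g.Monic) (hgirr : Irreducible g)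
    (hgdeg : g.natDegree = m')
    (hgB : g.coeff (m' - 1) = 0 ∧ g.coeff 1 = 1)
    (p₀ : Polynomial (ZMod 2)) (hp₀ : p₀ = Qtrans g)
    (hmon : p₀.Monic) (hirr : Irreducible p₀) (hdeg : p₀.natDegree = n')
    (hD : p₀.coeff (n' - 1) = 0 ∧ p₀.coeff 1 = 0)
    (α : GaloisField 2 n') (hroot : Polynomial.aeval α p₀ = 0)
    (hper : ¬ ThetaPeriodic α) :
    ∃ (s' : ℕ) (P : ℕ → Polynomial (ZMod 2)),
      1 ≤ s' ∧ s' ≤ l' ∧ P 0 = p₀ ∧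
      (∀ i ≤ s', (P i).Monic ∧ Irreducible (P i) ∧ (P i).natDegree = n') ∧
      (∀ i < s', P (i + 1) ∣ Qtrans (P i)) ∧
      (∀ i < s', (P i).coeff (n' - 1) = 0 ∧ (P i).coeff 1 = 0) ∧
      ((P s').coeff (n' - 1) = 1 ∧ (P s').coeff 1 = 1) := by
  obtain ⟨s, P, hsl, hP0, hP, hdvd, hPD, hPA⟩ :=
    stmt_8_general n' l' k hodd hfact g hgirr (hgdeg ▸ hn) (hp₀ ▸ hirr)
  refine ⟨s, P, Nat.one_le_iff_ne_zero.2 ?_, hsl, hP0.trans hp₀.symm, hP, hdvd, hPD, hPA⟩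
  rintro rfl
  exact one_ne_zero (hPA.2.symm.trans ((hP0.trans hp₀.symm) ▸ hD.2))
end

section
/- If f ∈ F_2[x] is a monic irreducible polynomial of degree n > 1, then either f^Q is a self-reciprocal irreducible polynomial of degree 2n, or f^Q is the product g · g* of a monic irreducible polynomial g of degree n and its reciprocal g*, where g* is also irreducible of degree n and neither g nor g* is self-reciprocal (in particular g ≠ g*). -/
open Polynomial

/-!
Let `α` be a root of an irreducible factor `g` of `f^Q`. Then `β = α + α⁻¹` is a root of `f`, so
`n = [K(β) : K]` divides `deg g = [K(α) : K] ≤ 2n`. If `deg g = 2n`, then `f^Q` is `g` up to a unit.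
If `deg g = n`, then `K(α) = K(β)`. Were `g*` associated to `g`, the map `α ↦ α⁻¹` would extend to a
`K`-endomorphism of `K(α)` fixing the generator `β`, so that `α = α⁻¹` and `β = ±2`; but `f` has no
root `±2`. Hence `g` and `g*` are coprime factors of the self-reciprocal polynomial `f^Q`, and their
degrees add up to `2n`. All of this works over an arbitrary field `K`.
-/

section Reverse

variable {R : Type*} [Semiring R] {p : R[X]}

theorem reflect_sum {ι : Type*} (N : ℕ) (s : Finset ι) (F : ι → R[X]) :
    reflect N (∑ i ∈ s, F i) = ∑ i ∈ s, reflect N (F i) := by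
  ext j
  simp only [coeff_reflect, finsetSum_coeff]

theorem reverse_eq_mirror (hp : p.coeff 0 ≠ 0) : p.reverse = p.mirror := by
  rw [mirror, natTrailingDegree_eq_zero_of_constantCoeff_ne_zero hp, pow_zero, mul_one]

theorem natDegree_reverse (hp : p.coeff 0 ≠ 0) : p.reverse.natDegree = p.natDegree := by
  rw [reverse_eq_mirror hp, mirror_natDegree]

theorem reverse_reverse (hp : p.coeff 0 ≠ 0) : p.reverse.reverse = p := by
  rw [reverse, natDegree_reverse hp, reverse, reflect_reflect]

theorem irreducible_mirror [NoZeroDivisors R] (hp : Irreducible p) : Irreducible p.mirror :=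
  let mirrorEquiv : R[X] ≃* R[X] :=
    { mirror_involutive.toPerm with map_mul' := fun p q => mirror_mul_of_domain p q }
  (MulEquiv.irreducible_iff mirrorEquiv).mpr hp

theorem irreducible_reverse [NoZeroDivisors R] (hp : Irreducible p) (h0 : p.coeff 0 ≠ 0) :
    Irreducible p.reverse :=
  reverse_eq_mirror h0 ▸ irreducible_mirror hp

end Reverse

theorem aeval_inv_eq_zero_of_associated_reverse {R L : Type*} [CommSemiring R] [Semifield L]
    [Algebra R L] {p : R[X]} (hp : Associated p.reverse p) {α : L} (hα : α ≠ 0)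
    (hroot : aeval α p = 0) : aeval α⁻¹ p = 0 := by
  have hrev : aeval α⁻¹ p.reverse = 0 := by
    let : Invertible α := invertibleOfNonzero hα
    exact (eval₂_reverse_eq_zero_iff (algebraMap R L) α p).mpr hroot
  exact zero_dvd_iff.mp (hrev ▸ map_dvd (aeval α⁻¹) hp.dvd)

instance subsingleton_units_polynomial {R : Type*} [Semiring R] [NoZeroDivisors R]
    [Subsingleton Rˣ] : Subsingleton R[X]ˣ := by
  refine subsingleton_of_forall_eq 1 fun u => Units.ext ?_
  obtain ⟨r, hr, hu⟩ := isUnit_iff.mp u.isUnit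
  rw [← hu, isUnit_iff_eq_one.mp hr, C_1, Units.val_one]

theorem inv_eq_self_of_adjoin_add_inv_eq_top {R L : Type*} [CommSemiring R]
    [DivisionSemiring L] [Algebra R L] {α : L} (htop : Algebra.adjoin R {α + α⁻¹} = ⊤)
    (σ : L →ₐ[R] L) (hσ : σ α = α⁻¹) : α⁻¹ = α := by
  have hid : σ = AlgHom.id R L := by
    refine AlgHom.ext_of_adjoin_eq_top htop (Set.eqOn_singleton.mpr ?_)
    rw [map_add, map_inv₀, hσ, inv_inv, add_comm, AlgHom.id_apply]
  rw [← hσ, hid, AlgHom.id_apply]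

section QTransform

variable {R : Type*} [CommSemiring R]

/-- The Q-transform `f^Q = X ^ n * f (X + X⁻¹)`, where `n = f.natDegree`, over any commutative
semiring. The factor `X ^ n` is distributed over the terms of `f`, so that no inverse is needed. -/
noncomputable def qTransform (f : R[X]) : R[X] :=
  ∑ i ∈ Finset.range (f.natDegree + 1), C (f.coeff i) * X ^ (f.natDegree - i) * (X ^ 2 + 1) ^ i

theorem Qtrans_eq_qTransform (f : (ZMod 2)[X]) : Qtrans f = qTransform f := rfl

theorem aeval_qTransform {L : Type*} [Semifield L] [Algebra R L] (f : R[X]) {α : L} (hα : α ≠ 0) :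
    aeval α (qTransform f) = α ^ f.natDegree * aeval (α + α⁻¹) f := by
  have hsq : α ^ 2 + 1 = α * (α + α⁻¹) := by field_simp
  rw [aeval_eq_sum_range (p := f), qTransform, map_sum, Finset.mul_sum]
  refine Finset.sum_congr rfl fun i hi => ?_
  simp only [map_mul, map_pow, map_add, aeval_X, aeval_C, map_one, hsq, Algebra.smul_def, mul_pow]
  rw [← pow_sub_mul_pow α (Finset.mem_range_succ_iff.mp hi)]
  ring

theorem natDegree_X_sq_add_one_pow_le (i : ℕ) : ((X ^ 2 + 1 : R[X]) ^ i).natDegree ≤ 2 * i :=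
  (natDegree_pow_le_of_le i (by compute_degree)).trans_eq (mul_comm i 2)

theorem reflect_X_sq_add_one_pow (i : ℕ) :
    reflect (2 * i) ((X ^ 2 + 1 : R[X]) ^ i) = (X ^ 2 + 1) ^ i := by
  induction i with
  | zero => rw [mul_zero, pow_zero, reflect_one, pow_zero]
  | succ i ih =>
    have hbase : reflect 2 (X ^ 2 + 1 : R[X]) = X ^ 2 + 1 := by
      rw [reflect_add, reflect_monomial, reflect_one, revAt_le le_rfl, Nat.sub_self, pow_zero,
        add_comm]
    rw [pow_succ, mul_add_one, reflect_mul _ _ (natDegree_X_sq_add_one_pow_le i)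
      (by compute_degree), ih, hbase]

theorem reflect_qTransform (f : R[X]) :
    reflect (2 * f.natDegree) (qTransform f) = qTransform f := by
  rw [qTransform, reflect_sum]
  refine Finset.sum_congr rfl fun i hi => ?_
  obtain ⟨k, hk⟩ := Nat.exists_eq_add_of_le (Finset.mem_range_succ_iff.mp hi)
  have hX : reflect (2 * k) (X ^ k : R[X]) = X ^ k := by
    rw [reflect_monomial, revAt_le (by lia), two_mul, Nat.add_sub_cancel]
  rw [hk, Nat.add_sub_cancel_left, mul_assoc, reflect_C_mul, mul_add, add_comm (2 * i),
    reflect_mul _ _ ((natDegree_X_pow_le k).trans (by lia)) (natDegree_X_sq_add_one_pow_le i),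
    hX, reflect_X_sq_add_one_pow]

theorem coeff_zero_qTransform (f : R[X]) : (qTransform f).coeff 0 = f.leadingCoeff := by
  rw [qTransform, finsetSum_coeff, Finset.sum_range_succ, Finset.sum_eq_zero, zero_add]
  · simp [coeff_zero_eq_eval_zero]
  · intro i hi
    have hi : f.natDegree - i ≠ 0 := Nat.sub_ne_zero_of_lt (Finset.mem_range.mp hi)
    simp [mul_coeff_zero, coeff_X_pow, hi.symm]

theorem natDegree_qTransform_le (f : R[X]) : (qTransform f).natDegree ≤ 2 * f.natDegree := by
  refine natDegree_sum_le_of_forall_le _ _ fun i hi => ?_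
  refine (natDegree_mul_le_of_le (natDegree_C_mul_X_pow_le _ _)
    (natDegree_X_sq_add_one_pow_le i)).trans ?_
  have hi := Finset.mem_range_succ_iff.mp hi
  lia

theorem natDegree_qTransform (f : R[X]) : (qTransform f).natDegree = 2 * f.natDegree := by
  rcases eq_or_ne f 0 with rfl | hf
  · simp [qTransform]
  · refine natDegree_eq_of_le_of_coeff_ne_zero (natDegree_qTransform_le f) ?_
    rw [← reflect_qTransform, coeff_reflect, revAt_le le_rfl, Nat.sub_self, coeff_zero_qTransform]
    exact leadingCoeff_ne_zero.mpr hf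

theorem reverse_qTransform (f : R[X]) : (qTransform f).reverse = qTransform f := by
  rw [reverse, natDegree_qTransform, reflect_qTransform]

theorem qTransform_ne_zero {f : R[X]} (hf : f ≠ 0) : qTransform f ≠ 0 := by
  intro h
  rw [← leadingCoeff_ne_zero, ← coeff_zero_qTransform, h, coeff_zero] at hf
  exact hf rfl

theorem coeff_zero_ne_zero_of_dvd_qTransform {f g : R[X]} (hf : f ≠ 0) (hgf : g ∣ qTransform f) :
    g.coeff 0 ≠ 0 := by
  obtain ⟨q, hq⟩ := hgf
  have hmul : g.coeff 0 * q.coeff 0 ≠ 0 := by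
    rwa [← mul_coeff_zero, ← hq, coeff_zero_qTransform, leadingCoeff_ne_zero]
  exact left_ne_zero_of_mul hmul

theorem reverse_dvd_qTransform [NoZeroDivisors R] {f g : R[X]} (hgf : g ∣ qTransform f) :
    g.reverse ∣ qTransform f := by
  obtain ⟨q, hq⟩ := hgf
  exact ⟨q.reverse, by rw [← reverse_mul_of_domain, ← hq, reverse_qTransform]⟩

end QTransform

section Factors

open AdjoinRoot

variable {K : Type*} [Field K] {f g : K[X]}

theorem natDegree_minpoly_of_irreducible {L : Type*} [Ring L] [Nontrivial L] [Algebra K L]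
    (hf : Irreducible f) {β : L} (hroot : aeval β f = 0) :
    (minpoly K β).natDegree = f.natDegree := by
  rw [← minpoly.eq_of_irreducible hf hroot,
    natDegree_mul_C (inv_ne_zero (leadingCoeff_ne_zero.mpr hf.ne_zero))]

theorem root_ne_zero_of_dvd_qTransform [Fact (Irreducible g)] (hf : f ≠ 0)
    (hgf : g ∣ qTransform f) : root g ≠ 0 := by
  intro hroot
  have haeval : aeval (root g) g = 0 := by rw [aeval_eq, mk_self]
  rw [hroot, ← coeff_zero_eq_aeval_zero', map_eq_zero] at haeval
  exact coeff_zero_ne_zero_of_dvd_qTransform hf hgf haeval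

theorem aeval_root_add_inv_eq_zero [Fact (Irreducible g)] (hf : f ≠ 0) (hgf : g ∣ qTransform f) :
    aeval (root g + (root g)⁻¹) f = 0 := by
  have hα := root_ne_zero_of_dvd_qTransform hf hgf
  have hroot : aeval (root g) (qTransform f) = 0 := by rwa [aeval_eq, mk_eq_zero]
  rw [aeval_qTransform f hα] at hroot
  exact (mul_eq_zero.mp hroot).resolve_left (pow_ne_zero _ hα)

theorem natDegree_eq_or_eq_of_dvd_qTransform (hf : Irreducible f) (hg : Irreducible g)
    (hgf : g ∣ qTransform f) : g.natDegree = f.natDegree ∨ g.natDegree = 2 * f.natDegree := by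
  have : Fact (Irreducible g) := ⟨hg⟩
  have : FiniteDimensional K (AdjoinRoot g) := (powerBasis hg.ne_zero).finite
  have hdvd : f.natDegree ∣ g.natDegree := by
    rw [← natDegree_minpoly_of_irreducible hf (aeval_root_add_inv_eq_zero hf.ne_zero hgf),
      ← powerBasis_dim hg.ne_zero, ← (powerBasis hg.ne_zero).finrank]
    exact minpoly.degree_dvd (IsIntegral.of_finite K _)
  have hle : g.natDegree ≤ 2 * f.natDegree :=
    natDegree_qTransform f ▸ natDegree_le_of_dvd hgf (qTransform_ne_zero hf.ne_zero)
  have hpos : 0 < g.natDegree := hg.natDegree_pos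
  obtain ⟨c, hc⟩ := hdvd
  have hc_pos : 0 < c := pos_of_mul_pos_right (hc ▸ hpos) (Nat.zero_le _)
  have hc_le : c ≤ 2 := by
    refine le_of_mul_le_mul_left ?_ hf.natDegree_pos
    rwa [← hc, mul_comm]
  interval_cases c
  · exact Or.inl (by rw [hc, mul_one])
  · exact Or.inr (by rw [hc, mul_comm])

theorem adjoin_root_add_inv_eq_top [Fact (Irreducible g)] (hf : Irreducible f)
    (hgf : g ∣ qTransform f) (hdeg : g.natDegree = f.natDegree) :
    Algebra.adjoin K {root g + (root g)⁻¹} = ⊤ := by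
  have hg : g ≠ 0 := (Fact.out : Irreducible g).ne_zero
  have : FiniteDimensional K (AdjoinRoot g) := (powerBasis hg).finite
  refine Algebra.adjoin_eq_top_of_primitive_element (IsAlgebraic.of_finite K _) ?_
  rw [Field.primitive_element_iff_minpoly_natDegree_eq, (powerBasis hg).finrank,
    powerBasis_dim, hdeg]
  exact natDegree_minpoly_of_irreducible hf (aeval_root_add_inv_eq_zero hf.ne_zero hgf)

theorem not_associated_reverse_of_dvd_qTransform (hf : Irreducible f) (hg : Irreducible g)
    (hgf : g ∣ qTransform f) (hdeg : g.natDegree = f.natDegree) (h_two : ¬f.IsRoot 2)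
    (h_neg_two : ¬f.IsRoot (-2)) : ¬Associated g.reverse g := by
  intro hassoc
  have : Fact (Irreducible g) := ⟨hg⟩
  have hα := root_ne_zero_of_dvd_qTransform hf.ne_zero hgf
  have hβ := aeval_root_add_inv_eq_zero hf.ne_zero hgf
  have hinv : aeval (root g)⁻¹ g = 0 :=
    aeval_inv_eq_zero_of_associated_reverse hassoc hα (by rw [aeval_eq, mk_self])
  have hself : (root g)⁻¹ = root g :=
    inv_eq_self_of_adjoin_add_inv_eq_top (adjoin_root_add_inv_eq_top hf hgf hdeg)
      (liftAlgHom g (Algebra.ofId K _) _ hinv) (liftAlgHom_root g _ _ hinv)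
  have not_two (c : K) (hc : ¬f.IsRoot c) : root g + (root g)⁻¹ ≠ algebraMap K _ c := by
    intro h
    rw [h, aeval_algebraMap_apply, map_eq_zero] at hβ
    exact hc hβ
  rcases inv_eq_self₀.mp hself with h | h | h
  · exact not_two (-2) h_neg_two (by rw [hself, h, map_neg, map_ofNat]; ring)
  · exact hα h
  · exact not_two 2 h_two (by rw [hself, h, map_ofNat]; ring)

theorem associated_mul_reverse_of_dvd_qTransform (hf : f ≠ 0) (hg : Irreducible g)
    (hgf : g ∣ qTransform f) (hdeg : g.natDegree = f.natDegree)
    (hassoc : ¬Associated g.reverse g) : Associated (qTransform f) (g * g.reverse) := by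
  have h0 := coeff_zero_ne_zero_of_dvd_qTransform hf hgf
  have hrev := irreducible_reverse hg h0
  have hcop : IsCoprime g g.reverse :=
    hg.coprime_iff_not_dvd.mpr fun h => hassoc (hg.associated_of_dvd hrev h).symm
  refine (associated_of_dvd_of_natDegree_le (hcop.mul_dvd hgf (reverse_dvd_qTransform hgf))
    (qTransform_ne_zero hf) ?_).symm
  rw [natDegree_mul hg.ne_zero hrev.ne_zero, natDegree_reverse h0, natDegree_qTransform, hdeg,
    two_mul]

theorem stmt_9_general (hf : Irreducible f) (h_two : ¬f.IsRoot 2) (h_neg_two : ¬f.IsRoot (-2)) :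
    (Irreducible (qTransform f) ∧ (qTransform f).natDegree = 2 * f.natDegree ∧
      (qTransform f).reverse = qTransform f) ∨
    (∃ g : K[X],
      g.Monic ∧ Irreducible g ∧ g.natDegree = f.natDegree ∧
      Associated (qTransform f) (g * g.reverse) ∧
      Irreducible g.reverse ∧ g.reverse.natDegree = f.natDegree ∧
      ¬Associated g.reverse g ∧ ¬Associated g.reverse.reverse g.reverse) := by
  have hdegF := natDegree_qTransform f
  have hunit : ¬IsUnit (qTransform f) :=
    not_isUnit_of_natDegree_pos _ (hdegF ▸ Nat.mul_pos two_pos hf.natDegree_pos)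
  obtain ⟨g, hmon, hg, hgf⟩ := exists_monic_irreducible_factor _ hunit
  rcases natDegree_eq_or_eq_of_dvd_qTransform hf hg hgf with hdeg | hdeg
  · have h0 := coeff_zero_ne_zero_of_dvd_qTransform hf.ne_zero hgf
    have hassoc := not_associated_reverse_of_dvd_qTransform hf hg hgf hdeg h_two h_neg_two
    refine Or.inr ⟨g, hmon, hg, hdeg,
      associated_mul_reverse_of_dvd_qTransform hf.ne_zero hg hgf hdeg hassoc,
      irreducible_reverse hg h0, (natDegree_reverse h0).trans hdeg, hassoc, ?_⟩
    rw [reverse_reverse h0]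
    exact fun h => hassoc h.symm
  · have hassoc : Associated g (qTransform f) :=
      associated_of_dvd_of_natDegree_le hgf (qTransform_ne_zero hf.ne_zero) (by rw [hdegF, hdeg])
    exact Or.inl ⟨hassoc.irreducible hg, hdegF, reverse_qTransform f⟩

end Factors

theorem stmt_9 (n : ℕ) (hn : 1 < n) (f : Polynomial (ZMod 2))
    (hmon : f.Monic) (hirr : Irreducible f) (hdeg : f.natDegree = n) :
    (Irreducible (Qtrans f) ∧ (Qtrans f).natDegree = 2 * n ∧
      (Qtrans f).reverse = Qtrans f) ∨
    (∃ g : Polynomial (ZMod 2),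
      g.Monic ∧ Irreducible g ∧ g.natDegree = n ∧
      Qtrans f = g * g.reverse ∧
      Irreducible g.reverse ∧ g.reverse.natDegree = n ∧
      g.reverse ≠ g ∧ g.reverse.reverse ≠ g.reverse) := by
  have hroot {c : ZMod 2} : ¬f.IsRoot c := hirr.not_isRoot_of_natDegree_ne_one (by lia)
  simpa only [Qtrans_eq_qTransform, associated_iff_eq, ne_eq, hdeg]
    using stmt_9_general hirr hroot hroot
end

section
/- Suppose g = x^{2n} + b_{2n-1}x^{2n-1} + ⋯ + b_1 x + b_0 ∈ F_2[x] is a self-reciprocal polynomial of degree 2n which factors as g = f · f*, where f = x^n + a_{n-1}x^{n-1} + ⋯ + a_1 x + a_0 is monic irreducible over F_2 of degree n with a_0 = 1. Then: if b_{2n-1} = b_1 = 0 then a_{n-1} = a_1; and if b_{2n-1} = b_1 = 1 then a_{n-1} ≠ a_1, i.e. one of f, f* is of type (B,n) and the other is of type (C,n). -/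
open Polynomial

theorem coeff_one_mul_reverse {R : Type*} [Semiring R] (f : R[X]) :
    (f * f.reverse).coeff 1 = f.coeff 0 * f.nextCoeff + f.coeff 1 * f.leadingCoeff := by
  rw [mul_coeff_one, coeff_one_reverse, coeff_zero_reverse]

theorem stmt_10_general {R : Type*} [Ring R] [CharP R 2] {f : R[X]}
    (hmonic : f.Monic) (hcoeff_zero : f.coeff 0 = 1) (hdeg : 0 < f.natDegree) :
    (f * f.reverse).coeff 1 = 0 ↔ f.coeff (f.natDegree - 1) = f.coeff 1 := by
  rw [coeff_one_mul_reverse, hcoeff_zero, hmonic.leadingCoeff, one_mul, mul_one,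
    CharTwo.add_eq_zero, nextCoeff_of_natDegree_pos hdeg]

theorem stmt_10 (n : ℕ) (g f : Polynomial (ZMod 2))
    (hgdeg : g.natDegree = 2 * n) (hself : g.reverse = g)
    (hfmon : f.Monic) (hfirr : Irreducible f) (hfdeg : f.natDegree = n)
    (hf0 : f.coeff 0 = 1) (hfact : g = f * f.reverse) :
    (g.coeff (2 * n - 1) = 0 ∧ g.coeff 1 = 0 → f.coeff (n - 1) = f.coeff 1) ∧
    (g.coeff (2 * n - 1) = 1 ∧ g.coeff 1 = 1 → f.coeff (n - 1) ≠ f.coeff 1) := by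
  have hiff : g.coeff 1 = 0 ↔ f.coeff (n - 1) = f.coeff 1 :=
    hfact ▸ hfdeg ▸ stmt_10_general hfmon hf0 hfirr.natDegree_pos
  exact ⟨fun hg ↦ hiff.mp hg.2, fun hg ↦ mt hiff.mpr (hg.2 ▸ one_ne_zero)⟩
end
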